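/- arXiv:1003.5068 — 2 statements merged into one kernel-verified Lean document; each statement's English description precedes it below -/
import Mathlib

section
/- Lemma 1: for every ε ∈ (0,1), for all states x ∈ ℕ^K except finitely many, Σ_{i=1}^N p_i(x) log w_i(x) ≥ (1−ε) log w(x), where terms with w_i(x) = 0 (hence p_i(x) = 0) are omitted from the sum. -/
/-!
Write `Z = ∑ i, w i` for `N` nonnegative weights with maximum `M`. Convexity of `t ↦ t * log t`
turns the average of the `w i * log (w i)` into the lower bound
`∑ i, (w i / Z) * log (w i) ≥ log (Z / N) ≥ log M - log N`, whose loss `log N` does not depend on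
the state. It is at most `ε * log M` once `M` is large, and each singleton schedule `{k}` forces
`M ≥ α k * x k`, so `M` is small for finitely many states only.
-/

open scoped BigOperators

namespace FlowCSMA

/-- A set of links is a feasible schedule if its links are pairwise non-conflicting. -/
def Feasible {K : ℕ} (conflict : Fin K → Fin K → Prop) (S : Finset (Fin K)) : Prop :=
  ∀ k ∈ S, ∀ l ∈ S, k ≠ l → ¬ conflict k l

/-- Weight of schedule `i` in state `x`:  `w_i(x) = ∏_{k ∈ S_i} α_k x_k`
(equal to 1 for the empty schedule). -/
noncomputable def schedWeight {K N : ℕ} (Sched : Fin N → Finset (Fin K)) (α : Fin K → ℝ)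
    (x : Fin K → ℕ) (i : Fin N) : ℝ :=
  ∏ k ∈ Sched i, α k * (x k : ℝ)

/-- Selection probability of schedule `i` in state `x`. -/
noncomputable def schedProb {K N : ℕ} (Sched : Fin N → Finset (Fin K)) (α : Fin K → ℝ)
    (x : Fin K → ℕ) (i : Fin N) : ℝ :=
  schedWeight Sched α x i / ∑ j, schedWeight Sched α x j

/-- Maximal schedule weight `w(x) = max_{1 ≤ i ≤ N} w_i(x)`. -/
noncomputable def maxWeight {K N : ℕ} (hN : 0 < N) (Sched : Fin N → Finset (Fin K))
    (α : Fin K → ℝ) (x : Fin K → ℕ) : ℝ :=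
  Finset.univ.sup' (Finset.univ_nonempty_iff.mpr ⟨⟨0, hN⟩⟩) (schedWeight Sched α x)

section Weights

open Filter

variable {ι : Type*} {s : Finset ι}

lemma log_sum_div_card_le_sum_div_sum_mul_log {w : ι → ℝ} (hw : ∀ i ∈ s, 0 ≤ w i)
    (hsum : 0 < ∑ i ∈ s, w i) :
    Real.log ((∑ i ∈ s, w i) / s.card) ≤ ∑ i ∈ s, w i / (∑ j ∈ s, w j) * Real.log (w i) := by
  have hcard : (0 : ℝ) < s.card := by
    exact_mod_cast (Finset.nonempty_of_sum_ne_zero hsum.ne').card_pos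
  have jensen := Real.convexOn_mul_log.map_sum_le (t := s) (w := fun _ ↦ (s.card : ℝ)⁻¹) (p := w)
    (fun _ _ ↦ by positivity) (by simp [hcard.ne']) hw
  simp only [smul_eq_mul, ← Finset.mul_sum] at jensen
  calc Real.log ((∑ i ∈ s, w i) / s.card)
    _ = s.card / (∑ i ∈ s, w i) * ((s.card : ℝ)⁻¹ * (∑ i ∈ s, w i) *
          Real.log ((s.card : ℝ)⁻¹ * ∑ i ∈ s, w i)) := by
      rw [div_eq_inv_mul]
      field_simp
    _ ≤ s.card / (∑ i ∈ s, w i) * ((s.card : ℝ)⁻¹ * ∑ i ∈ s, w i * Real.log (w i)) := by gcongr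
    _ = (∑ i ∈ s, w i * Real.log (w i)) / ∑ i ∈ s, w i := by field_simp
    _ = ∑ i ∈ s, w i / (∑ j ∈ s, w j) * Real.log (w i) := by
      simp only [Finset.sum_div, div_mul_eq_mul_div]

lemma log_sup'_sub_log_card_le_sum_div_sum_mul_log (hs : s.Nonempty) {w : ι → ℝ}
    (hw : ∀ i ∈ s, 0 ≤ w i) (hsup : 0 < s.sup' hs w) :
    Real.log (s.sup' hs w) - Real.log s.card ≤
      ∑ i ∈ s, w i / (∑ j ∈ s, w j) * Real.log (w i) := by
  have hcard : (0 : ℝ) < s.card := by exact_mod_cast hs.card_pos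
  have hle : s.sup' hs w ≤ ∑ i ∈ s, w i :=
    Finset.sup'_le hs w fun i hi ↦ Finset.single_le_sum hw hi
  calc Real.log (s.sup' hs w) - Real.log s.card
    _ = Real.log (s.sup' hs w / s.card) := (Real.log_div hsup.ne' hcard.ne').symm
    _ ≤ Real.log ((∑ i ∈ s, w i) / s.card) := by gcongr
    _ ≤ _ := log_sum_div_card_le_sum_div_sum_mul_log hw (hsup.trans_le hle)

lemma eventually_mul_log_sup'_le_sum_div_sum_mul_log {X : Type*} {l : Filter X} (hs : s.Nonempty)
    {w : X → ι → ℝ} (hw : ∀ x, ∀ i ∈ s, 0 ≤ w x i)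
    (hsup : Tendsto (fun x ↦ s.sup' hs (w x)) l atTop) {ε : ℝ} (hε : 0 < ε) :
    ∀ᶠ x in l, (1 - ε) * Real.log (s.sup' hs (w x)) ≤
      ∑ i ∈ s, w x i / (∑ j ∈ s, w x j) * Real.log (w x i) := by
  have hlog : Tendsto (fun x ↦ ε * Real.log (s.sup' hs (w x))) l atTop :=
    (Real.tendsto_log_atTop.comp hsup).const_mul_atTop hε
  filter_upwards [hsup.eventually_gt_atTop 0, hlog.eventually_ge_atTop (Real.log s.card)]
    with x hpos hcard
  linarith [log_sup'_sub_log_card_le_sum_div_sum_mul_log hs (hw x) hpos]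

lemma tendsto_cofinite_atTop_of_forall_apply_le {κ β : Type*} [Finite κ] [Preorder β]
    {γ : κ → Type*} {f : (∀ k, γ k) → β} {g : ∀ k, γ k → β}
    (hg : ∀ k, Tendsto (g k) cofinite atTop) (hle : ∀ k x, g k (x k) ≤ f x) :
    Tendsto f cofinite atTop := by
  rw [← coprodᵢ_cofinite, Filter.coprodᵢ, tendsto_iSup]
  exact fun k ↦ tendsto_atTop_mono (hle k) ((hg k).comp tendsto_comap)

end Weights

section Schedules

open Filter

variable {K N : ℕ} {conflict : Fin K → Fin K → Prop} {Sched : Fin N → Finset (Fin K)}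
  {α : Fin K → ℝ}

lemma feasible_singleton (k : Fin K) : Feasible conflict {k} := by
  intro a ha b hb hab
  exact absurd ((Finset.mem_singleton.mp ha).trans (Finset.mem_singleton.mp hb).symm) hab

lemma schedWeight_nonneg (hα : ∀ k, 0 ≤ α k) (x : Fin K → ℕ) (i : Fin N) :
    0 ≤ schedWeight Sched α x i :=
  Finset.prod_nonneg fun k _ ↦ mul_nonneg (hα k) (x k).cast_nonneg

lemma mul_le_maxWeight (hN : 0 < N) {i : Fin N} {k : Fin K} (hi : Sched i = {k})
    (x : Fin K → ℕ) : α k * x k ≤ maxWeight hN Sched α x := by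
  calc α k * x k
    _ = schedWeight Sched α x i := by rw [schedWeight, hi, Finset.prod_singleton]
    _ ≤ maxWeight hN Sched α x := Finset.le_sup' _ (Finset.mem_univ i)

lemma tendsto_maxWeight_cofinite_atTop (hN : 0 < N) (hsingle : ∀ k, ∃ i, Sched i = {k})
    (hα : ∀ k, 0 < α k) : Tendsto (maxWeight hN Sched α) cofinite atTop := by
  refine tendsto_cofinite_atTop_of_forall_apply_le (g := fun k n ↦ α k * n) (fun k ↦ ?_)
    fun k x ↦ (hsingle k).elim fun _ hi ↦ mul_le_maxWeight hN hi x
  rw [Nat.cofinite_eq_atTop]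
  exact tendsto_natCast_atTop_atTop.const_mul_atTop (hα k)

theorem lemma_one_general (hN : 0 < N) (hsingle : ∀ k, ∃ i, Sched i = {k})
    (hα : ∀ k, 0 < α k) {ε : ℝ} (hε : 0 < ε) :
    ∀ᶠ x in cofinite, (1 - ε) * Real.log (maxWeight hN Sched α x) ≤
      ∑ i, schedProb Sched α x i * Real.log (schedWeight Sched α x i) :=
  eventually_mul_log_sup'_le_sum_div_sum_mul_log _
    (fun x i _ ↦ schedWeight_nonneg (fun k ↦ (hα k).le) x i)
    (tendsto_maxWeight_cofinite_atTop hN hsingle hα) hε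

end Schedules

/-- Lemma 1: for every `ε ∈ (0,1)`, for all states `x ∈ ℕ^K` except finitely many,
`∑_i p_i(x) log w_i(x) ≥ (1-ε) log w(x)` (terms with `w_i(x) = 0`, hence `p_i(x) = 0`,
vanish, consistently with `Real.log 0 = 0`). -/
theorem lemma_one
    {K N : ℕ} (hK : 0 < K) (hN : 0 < N)
    (conflict : Fin K → Fin K → Prop)
    (hsymm : ∀ k l, conflict k l → conflict l k)
    (Sched : Fin N → Finset (Fin K))
    (hfeas : ∀ i, Feasible conflict (Sched i))
    (hinj : Function.Injective Sched)
    (hsurj : ∀ S : Finset (Fin K), Feasible conflict S → ∃ i, Sched i = S)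
    (hS0 : Sched ⟨0, hN⟩ = ∅)
    (α : Fin K → ℝ) (hα : ∀ k, 0 < α k)
    (ε : ℝ) (hε0 : 0 < ε) (hε1 : ε < 1) :
    ∃ A : Set (Fin K → ℕ), A.Finite ∧ ∀ x ∉ A,
      (1 - ε) * Real.log (maxWeight hN Sched α x) ≤
        ∑ i, schedProb Sched α x i * Real.log (schedWeight Sched α x i) :=
  ⟨_, lemma_one_general hN (fun k ↦ hsurj {k} (feasible_singleton k)) hα hε0,
    fun _ ↦ Set.notMem_compl_iff.mp⟩

end FlowCSMA
end

section
/- Divergence of the weighted log-weight: if (q_1,…,q_N) is a probability vector with q_i > 0 for all i = 1,…,N, then Σ_{i=1}^N q_i log w̃_i(x) → +∞ as Σ_{k=1}^K x_k → ∞; equivalently, for every M > 0 there are only finitely many states x ∈ ℕ^K with Σ_i q_i log w̃_i(x) < M. -/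
open scoped BigOperators

namespace FlowCSMA

/-- Restricted schedule weight `w̃_i(x) = ∏_{k ∈ S_i, x_k > 0} α_k x_k`
(with the empty product equal to 1). -/
noncomputable def restWeight {K N : ℕ} (Sched : Fin N → Finset (Fin K)) (α : Fin K → ℝ)
    (x : Fin K → ℕ) (i : Fin N) : ℝ :=
  ∏ k ∈ (Sched i).filter (fun k => 0 < x k), α k * (x k : ℝ)

/-!
Since `Real.log 0 = 0`, the logarithm of `w̃_i(x)` is `∑_{k ∈ S_i} log (α_k x_k)`, empty queues
included. Exchanging the sums turns the weighted log-weight into `∑_k p_k log (α_k x_k)`, where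
`p_k` is the total weight of the schedules containing `k`. Each `p_k` is positive, so this is a sum
of functions of the separate coordinates that each diverge, and are therefore bounded below: if it
stays bounded above, every coordinate stays in a finite set.
-/

open Filter

theorem tendsto_sum_apply_cofinite_atTop {ι R : Type*} {X : ι → Type*} [Fintype ι]
    [AddCommGroup R] [LinearOrder R] [IsOrderedAddMonoid R] {f : ∀ k, X k → R}
    (hf : ∀ k, Tendsto (f k) cofinite atTop) :
    Tendsto (fun x : ∀ k, X k => ∑ k, f k (x k)) cofinite atTop := by
  classical
  have bounded_below (k : ι) : ∃ c, ∀ a, c ≤ f k a := by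
    cases isEmpty_or_nonempty (X k)
    · exact ⟨0, isEmptyElim⟩
    · obtain ⟨a₀, ha₀⟩ := (hf k).exists_forall_le
      exact ⟨f k a₀, ha₀⟩
  choose c hc using bounded_below
  rw [← coprodᵢ_cofinite, Filter.coprodᵢ, tendsto_iSup]
  intro k
  simp only [← Finset.add_sum_erase _ _ (Finset.mem_univ k)]
  exact tendsto_atTop_add_right_of_le _ (∑ j ∈ Finset.univ.erase k, c j)
    ((hf k).comp tendsto_comap) fun x => Finset.sum_le_sum fun j _ => hc j (x j)

theorem tendsto_log_const_mul_natCast_cofinite_atTop {a : ℝ} (ha : 0 < a) :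
    Tendsto (fun n : ℕ => Real.log (a * n)) cofinite atTop := by
  rw [Nat.cofinite_eq_atTop]
  exact Real.tendsto_log_atTop.comp (tendsto_natCast_atTop_atTop.const_mul_atTop ha)

/-- The throughput of link `k` when schedule `i` is used with weight `q i`: the total weight of the
schedules that contain `k`. -/
def throughput {K N : ℕ} (Sched : Fin N → Finset (Fin K)) (q : Fin N → ℝ) (k : Fin K) : ℝ :=
  ∑ i with k ∈ Sched i, q i

section

variable {K N : ℕ} {Sched : Fin N → Finset (Fin K)}

theorem throughput_pos {q : Fin N → ℝ} (hq : ∀ i, 0 < q i) {k : Fin K}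
    (hk : ∃ i, k ∈ Sched i) : 0 < throughput Sched q k := by
  obtain ⟨i, hi⟩ := hk
  exact Finset.sum_pos (fun j _ => hq j) ⟨i, by simpa using hi⟩

theorem log_restWeight {α : Fin K → ℝ} (hα : ∀ k, α k ≠ 0) (x : Fin K → ℕ) (i : Fin N) :
    Real.log (restWeight Sched α x i) = ∑ k ∈ Sched i, Real.log (α k * x k) := by
  rw [restWeight, Real.log_prod]
  · refine Finset.sum_filter_of_ne fun k _ hlog => Nat.pos_of_ne_zero fun hx => hlog ?_
    rw [hx, Nat.cast_zero, mul_zero, Real.log_zero]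
  · intro k hk
    exact mul_ne_zero (hα k) (Nat.cast_ne_zero.mpr (Finset.mem_filter.mp hk).2.ne')

theorem sum_mul_log_restWeight {α : Fin K → ℝ} (hα : ∀ k, α k ≠ 0) (q : Fin N → ℝ)
    (x : Fin K → ℕ) :
    ∑ i, q i * Real.log (restWeight Sched α x i)
      = ∑ k, throughput Sched q k * Real.log (α k * x k) := by
  simp only [log_restWeight hα, throughput, Finset.mul_sum, Finset.sum_mul]
  exact Finset.sum_comm' (by simp)

theorem weighted_log_weight_diverges_general {α : Fin K → ℝ} (hα : ∀ k, 0 < α k)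
    {q : Fin N → ℝ} (hq : ∀ k, 0 < throughput Sched q k) :
    Tendsto (fun x : Fin K → ℕ => ∑ i, q i * Real.log (restWeight Sched α x i)) cofinite atTop := by
  have hterm (k : Fin K) :
      Tendsto (fun n : ℕ => throughput Sched q k * Real.log (α k * n)) cofinite atTop :=
    (tendsto_log_const_mul_natCast_cofinite_atTop (hα k)).const_mul_atTop (hq k)
  simpa only [sum_mul_log_restWeight fun k => (hα k).ne'] using
    tendsto_sum_apply_cofinite_atTop hterm

end

/-- Divergence of the weighted log-weight: if `(q_i)` is a strictly positive probability
vector, then `∑_i q_i log w̃_i(x) → +∞` as `∑_k x_k → ∞`; equivalently, for every `M > 0`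
only finitely many states satisfy `∑_i q_i log w̃_i(x) < M`. -/
theorem weighted_log_weight_diverges
    {K N : ℕ} (hK : 0 < K) (hN : 0 < N)
    (conflict : Fin K → Fin K → Prop)
    (hsymm : ∀ k l, conflict k l → conflict l k)
    (Sched : Fin N → Finset (Fin K))
    (hfeas : ∀ i, Feasible conflict (Sched i))
    (hinj : Function.Injective Sched)
    (hsurj : ∀ S : Finset (Fin K), Feasible conflict S → ∃ i, Sched i = S)
    (hS0 : Sched ⟨0, hN⟩ = ∅)
    (hsing : ∀ k : Fin K, ∃ i, Sched i = {k})
    (α : Fin K → ℝ) (hα : ∀ k, 0 < α k)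
    (q : Fin N → ℝ) (hq : ∀ i, 0 < q i) (hq1 : (∑ i, q i) = 1) :
    ∀ M : ℝ, 0 < M →
      {x : Fin K → ℕ | ∑ i, q i * Real.log (restWeight Sched α x i) < M}.Finite := by
  have hpos (k : Fin K) : 0 < throughput Sched q k :=
    throughput_pos hq ((hsing k).imp fun i hi => by simp [hi])
  intro M _
  simpa only [eventually_cofinite, not_le] using
    (weighted_log_weight_diverges_general hα hpos).eventually_ge_atTop M

end FlowCSMA
end
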